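/- Let m ≥ 1 and let (V, f) be a representation of the equioriented quiver of type A_m over ℂ: finite-dimensional ℂ-vector spaces V₁, …, V_m together with linear maps f_i : V_i → V_{i+1} for 1 ≤ i < m. For 1 ≤ a ≤ b ≤ m let I[a,b] denote the interval representation with I[a,b]_i = ℂ for a ≤ i ≤ b and I[a,b]_i = 0 otherwise, whose map ℂ → ℂ is the identity for a ≤ i < b and whose other maps are zero. Then (V, f) is isomorphic, as a representation (i.e. via linear isomorphisms g_i : V_i → W_i satisfying g_{i+1} ∘ f_i = f'_i ∘ g_i), to a finite direct sum of interval representations I[a,b]; in particular every indecomposable finite-dimensional representation of the A_m quiver has dimension vector of the form (0,…,0,1,1,…,1,0,…,0) with the nontrivial linear maps being isomorphisms. -/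

import Mathlib

/-- The space at vertex `i` (1-indexed) of the interval representation `I[a,b]`
of the equioriented `A_m` quiver: `ℂ` for `a ≤ i ≤ b` and `0` otherwise
(realized as the submodules `⊤` resp. `⊥` of `ℂ`). -/
noncomputable def intervalSpace (a b i : ℕ) : Submodule ℂ ℂ :=
  if a ≤ i ∧ i ≤ b then ⊤ else ⊥

open Classical in
/-- The structural map `I[a,b]_i → I[a,b]_{i+1}` of the interval representation:
the identity `ℂ → ℂ` for `a ≤ i < b`, and zero otherwise. -/
noncomputable def intervalMap (a b i : ℕ) :
    intervalSpace a b i →ₗ[ℂ] intervalSpace a b (i + 1) :=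
  if h : intervalSpace a b i ≤ intervalSpace a b (i + 1) then Submodule.inclusion h else 0

theorem AmAux.core {M : Type*} [AddCommGroup M] [Module ℂ M] [FiniteDimensional ℂ M]
    (T : M →ₗ[ℂ] M) (m : ℕ) (N : ℕ) :
    ∀ (W : ℕ → Submodule ℂ M), (∀ i, ∀ x ∈ W i, T x ∈ W (i + 1)) →
      (∀ i, m ≤ i → W i = ⊥) →
      (∑ i ∈ Finset.range m, Module.finrank ℂ (W i)) = N →
      ∃ (n : ℕ) (a b : Fin n → ℕ) (e : Fin n → ℕ → M),
        (∀ k, a k ≤ b k ∧ b k < m) ∧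
        (∀ k i, e k i ∈ W i) ∧
        (∀ k i, a k ≤ i → i < b k → T (e k i) = e k (i + 1)) ∧
        (∀ k, T (e k (b k)) = 0) ∧
        (∀ i, ∀ x ∈ W i, ∃ c : Fin n → ℂ, (∀ k, ¬ (a k ≤ i ∧ i ≤ b k) → c k = 0) ∧
          x = ∑ k, c k • e k i) ∧
        (∀ i, ∀ c : Fin n → ℂ, (∀ k, ¬ (a k ≤ i ∧ i ≤ b k) → c k = 0) →
          ∑ k, c k • e k i = 0 → ∀ k, c k = 0) := by
  induction N using Nat.strong_induction_on with
  | _ N ih =>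
  intro W hT hm hN
  by_cases h0 : ∀ i, W i = ⊥
  · refine ⟨0, Fin.elim0, Fin.elim0, Fin.elim0, fun k => k.elim0, fun k => k.elim0,
      fun k => k.elim0, fun k => k.elim0, ?_, fun _ _ _ _ k => k.elim0⟩
    intro i x hx
    rw [h0 i, Submodule.mem_bot] at hx
    exact ⟨Fin.elim0, fun k => k.elim0, by simp [hx]⟩
  push Not at h0
  classical
  obtain ⟨a, ha, hmin⟩ : ∃ a, W a ≠ ⊥ ∧ ∀ i < a, W i = ⊥ :=
    ⟨Nat.find h0, Nat.find_spec h0, fun i hi => by simpa using Nat.find_min h0 hi⟩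
  obtain ⟨v, hv, hv0⟩ := (Submodule.ne_bot_iff _).1 ha
  have hpow : ∀ j i, ∀ x ∈ W i, (T ^ j) x ∈ W (i + j) := by
    intro j
    induction j with
    | zero => intro i x hx; simpa using hx
    | succ j ihj =>
      intro i x hx
      rw [pow_succ', Module.End.mul_apply]
      exact hT _ _ (ihj i x hx)
  have hex : ∃ j, (T ^ (j + 1)) v = 0 := by
    refine ⟨m, ?_⟩
    have := hpow (m + 1) a v hv
    rwa [hm _ (by omega), Submodule.mem_bot] at this
  obtain ⟨d, hd, hd'⟩ : ∃ d, (T ^ (d + 1)) v = 0 ∧ (T ^ d) v ≠ 0 := by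
    refine ⟨Nat.find hex, Nat.find_spec hex, ?_⟩
    rcases hq : Nat.find hex with _ | q
    · simpa using hv0
    · exact Nat.find_min hex (m := q) (by omega)
  have hbm : a + d < m := by
    by_contra hc
    have := hpow d a v hv
    rw [hm _ (by omega), Submodule.mem_bot] at this
    exact hd' this
  obtain ⟨φ, hφ⟩ : ∃ φ : M →ₗ[ℂ] ℂ, φ ((T ^ d) v) = 1 := by
    obtain ⟨ψ, hψ⟩ := Module.Projective.exists_dual_ne_zero ℂ hd'
    exact ⟨(ψ ((T ^ d) v))⁻¹ • ψ, by simp [hψ]⟩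
  set W' : ℕ → Submodule ℂ M := fun i =>
    if a ≤ i ∧ i ≤ a + d then W i ⊓ LinearMap.ker (φ ∘ₗ (T ^ (a + d - i))) else W i with hW'
  have hmem : ∀ i x, x ∈ W' i ↔ x ∈ W i ∧ (a ≤ i ∧ i ≤ a + d → φ ((T ^ (a + d - i)) x) = 0) := by
    intro i x
    by_cases h : a ≤ i ∧ i ≤ a + d <;> simp [hW', h]
  have hle : ∀ i, W' i ≤ W i := fun i x hx => ((hmem i x).1 hx).1
  have hvW : v ∉ W' a := by
    intro h
    have := ((hmem a v).1 h).2 ⟨le_rfl, by omega⟩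
    rw [Nat.add_sub_cancel_left, hφ] at this
    exact one_ne_zero this
  have hlt : (∑ i ∈ Finset.range m, Module.finrank ℂ (W' i)) < N := by
    rw [← hN]
    refine Finset.sum_lt_sum (fun i _ => Submodule.finrank_mono (hle i))
      ⟨a, by simp; omega, Submodule.finrank_lt_finrank_of_lt
        (lt_of_le_of_ne (hle a) (fun h => hvW (h ▸ hv)))⟩
  have hT' : ∀ i, ∀ x ∈ W' i, T x ∈ W' (i + 1) := by
    intro i x hx
    rw [hmem] at hx ⊢
    refine ⟨hT i x hx.1, fun h => ?_⟩
    by_cases hai : a ≤ i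
    · have := hx.2 ⟨hai, by omega⟩
      rwa [show a + d - i = (a + d - (i + 1)) + 1 by omega, pow_succ, Module.End.mul_apply] at this
    · have h1 := hx.1
      rw [hmin i (by omega), Submodule.mem_bot] at h1
      simp [h1]
  have hm' : ∀ i, m ≤ i → W' i = ⊥ := fun i hi => by
    have := hle i
    rwa [hm i hi, le_bot_iff] at this
  obtain ⟨n, A, B, e, h1, h2, h3, h4, h5, h6⟩ := ih _ hlt W' hT' hm' rfl
  let e0 : ℕ → M := fun i => if a ≤ i ∧ i ≤ a + d then (T ^ (i - a)) v else 0
  have he0 : ∀ i, a ≤ i ∧ i ≤ a + d → e0 i = (T ^ (i - a)) v := fun i h => if_pos h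
  have he0W : ∀ i, e0 i ∈ W i := by
    intro i
    by_cases h : a ≤ i ∧ i ≤ a + d
    · rw [he0 i h]
      have := hpow (i - a) a v hv
      rwa [show a + (i - a) = i by omega] at this
    · simp [e0, h]
  have hφ0 : ∀ i, a ≤ i ∧ i ≤ a + d → φ ((T ^ (a + d - i)) (e0 i)) = 1 := by
    intro i h
    rw [he0 i h, ← Module.End.mul_apply, ← pow_add, show a + d - i + (i - a) = d by omega, hφ]
  refine ⟨n + 1, Fin.cons a A, Fin.cons (a + d) B, Fin.cons e0 e, ?_, ?_, ?_, ?_, ?_, ?_⟩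
  · refine Fin.cases ?_ ?_
    · exact ⟨by simp, by simpa using hbm⟩
    · intro k; simpa using h1 k
  · refine Fin.cases ?_ ?_
    · intro i; simpa using he0W i
    · intro k i; simpa using hle i (h2 k i)
  · refine Fin.cases ?_ ?_
    · intro i hi hi'
      simp only [Fin.cons_zero] at hi hi' ⊢
      rw [he0 i ⟨hi, by omega⟩, he0 (i + 1) ⟨by omega, by omega⟩,
        show i + 1 - a = (i - a) + 1 by omega, pow_succ', Module.End.mul_apply]
    · intro k i; simpa using h3 k i
  · refine Fin.cases ?_ ?_
    · simp only [Fin.cons_zero]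
      rw [he0 (a + d) ⟨by omega, le_rfl⟩, Nat.add_sub_cancel_left, ← Module.End.mul_apply,
        ← pow_succ', hd]
    · intro k; simpa using h4 k
  · intro i x hx
    by_cases h : a ≤ i ∧ i ≤ a + d
    · have hx' : x - φ ((T ^ (a + d - i)) x) • e0 i ∈ W' i := by
        rw [hmem]
        refine ⟨Submodule.sub_mem _ hx (Submodule.smul_mem _ _ (he0W i)), fun _ => ?_⟩
        simp [hφ0 i h]
      obtain ⟨c, hc, hc'⟩ := h5 i _ hx'
      refine ⟨Fin.cons (φ ((T ^ (a + d - i)) x)) c, ?_, ?_⟩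
      · refine Fin.cases ?_ ?_
        · intro hh; exact absurd h (by simpa using hh)
        · intro k; simpa using hc k
      · rw [Fin.sum_univ_succ]
        simp only [Fin.cons_zero, Fin.cons_succ]
        rw [← hc']; abel
    · have hx' : x ∈ W' i := (hmem i x).2 ⟨hx, fun hh => absurd hh h⟩
      obtain ⟨c, hc, hc'⟩ := h5 i _ hx'
      refine ⟨Fin.cons 0 c, ?_, ?_⟩
      · refine Fin.cases ?_ ?_
        · simp
        · intro k; simpa using hc k
      · rw [Fin.sum_univ_succ]
        simp only [Fin.cons_zero, Fin.cons_succ]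
        rw [← hc']; simp
  · intro i c hc hs
    rw [Fin.sum_univ_succ] at hs
    simp only [Fin.cons_zero, Fin.cons_succ] at hs
    have hc0 : c 0 = 0 := by
      by_cases h : a ≤ i ∧ i ≤ a + d
      · have hmemS : ∑ k, c (Fin.succ k) • e k i ∈ W' i :=
          Submodule.sum_mem _ fun k _ => Submodule.smul_mem _ _ (h2 k i)
        have hz := ((hmem _ _).1 hmemS).2 h
        have := congrArg (fun y => φ ((T ^ (a + d - i)) y)) hs
        simp only [map_add, hz, map_smul, hφ0 i h, map_zero] at this
        simpa using this
      · exact hc 0 (by simpa using h)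
    rw [hc0, zero_smul, zero_add] at hs
    refine Fin.cases hc0 ?_
    exact h6 i (fun k => c k.succ) (fun k hk => hc k.succ (by simpa using hk)) hs

theorem AmAux.mem_space {a b i : ℕ} {c : ℂ} :
    c ∈ intervalSpace a b i ↔ (¬ (a ≤ i ∧ i ≤ b) → c = 0) := by
  unfold intervalSpace
  split_ifs with h <;> simp [h]

theorem AmAux.map_coe {a b i : ℕ} (hi : i + 1 ≤ b) (c : intervalSpace a b i) :
    ((intervalMap a b i c : intervalSpace a b (i + 1)) : ℂ) = c := by
  have h : intervalSpace a b i ≤ intervalSpace a b (i + 1) := by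
    intro x hx
    rw [AmAux.mem_space] at hx ⊢
    exact fun h => hx (by omega)
  unfold intervalMap
  rw [dif_pos h]
  rfl

/-- Theorem 6.3 (Gabriel): every finite-dimensional representation of the equioriented
quiver of type `A_m` over `ℂ` is isomorphic, as a representation, to a finite direct sum
of interval representations `I[a,b]` with `1 ≤ a ≤ b ≤ m`. -/
theorem rep_of_Am_quiver_iso_direct_sum_of_intervals
    (m : ℕ) (hm : 1 ≤ m) (V : Fin m → Type*)
    [∀ i, AddCommGroup (V i)] [∀ i, Module ℂ (V i)] [∀ i, FiniteDimensional ℂ (V i)]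
    (f : ∀ (i : Fin m) (h : (i : ℕ) + 1 < m), V i →ₗ[ℂ] V ⟨(i : ℕ) + 1, h⟩) :
    ∃ (n : ℕ) (a b : Fin n → ℕ), (∀ k, 1 ≤ a k ∧ a k ≤ b k ∧ b k ≤ m) ∧
      ∃ g : ∀ i : Fin m, V i ≃ₗ[ℂ] (∀ k : Fin n, intervalSpace (a k) (b k) ((i : ℕ) + 1)),
        ∀ (i : Fin m) (h : (i : ℕ) + 1 < m) (v : V i) (k : Fin n),
          g ⟨(i : ℕ) + 1, h⟩ (f i h v) k
            = intervalMap (a k) (b k) ((i : ℕ) + 1) (g i v k) := by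
  classical
  let T : (∀ i, V i) →ₗ[ℂ] (∀ i, V i) := ∑ i : Fin m,
    if h : (i : ℕ) + 1 < m then
      LinearMap.single ℂ V ⟨(i : ℕ) + 1, h⟩ ∘ₗ f i h ∘ₗ LinearMap.proj i else 0
  have hT : ∀ (i : Fin m) (x : V i), T (Pi.single i x) =
      if h : (i : ℕ) + 1 < m then Pi.single (⟨(i : ℕ) + 1, h⟩ : Fin m) (f i h x) else 0 := by
    intro i x
    simp only [T, LinearMap.sum_apply]
    rw [Finset.sum_eq_single i]
    · split_ifs <;> simp
    · intro j _ hj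
      split_ifs <;> simp [Pi.single_eq_of_ne hj]
    · simp
  let W : ℕ → Submodule ℂ (∀ i, V i) := fun i =>
    if h : i < m then LinearMap.range (LinearMap.single ℂ V ⟨i, h⟩) else ⊥
  have hW : ∀ (i : Fin m) x, x ∈ W i ↔ ∃ y, Pi.single i y = x := by
    intro i x
    simp [W]
  obtain ⟨n, a, b, e, h1, h2, h3, h4, h5, h6⟩ := AmAux.core T m _ W (by
    intro i x hx
    by_cases h : i < m
    · obtain ⟨y, rfl⟩ := (hW ⟨i, h⟩ x).1 hx
      rw [hT]
      split_ifs with h'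
      · exact (hW ⟨i + 1, h'⟩ _).2 ⟨_, rfl⟩
      · exact Submodule.zero_mem _
    · have : x = 0 := by simpa [W, h] using hx
      simp [this]) (by
    intro i hi
    simp [W, Nat.not_lt.2 hi]) rfl
  let L : ∀ i : Fin m,
      (∀ k : Fin n, intervalSpace (a k + 1) (b k + 1) ((i : ℕ) + 1)) →ₗ[ℂ] V i := fun i =>
    { toFun := fun c => ∑ k, (c k : ℂ) • e k i i
      map_add' := fun c c' => by simp [add_smul, Finset.sum_add_distrib]
      map_smul' := fun r c => by simp [mul_smul, Finset.smul_sum] }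
  have hL : ∀ (i : Fin m) c, Pi.single i (L i c) = ∑ k, (c k : ℂ) • e k i := by
    intro i c
    have hmem : ∑ k, (c k : ℂ) • e k i ∈ W i :=
      Submodule.sum_mem _ fun k _ => Submodule.smul_mem _ _ (h2 k i)
    obtain ⟨y, hy⟩ := (hW i _).1 hmem
    have : y = L i c := by
      have := congrFun hy i
      simpa [L] using this
    rw [← this, hy]
  have hbij : ∀ i, Function.Bijective (L i) := by
    intro i
    constructor
    · rw [← LinearMap.ker_eq_bot, LinearMap.ker_eq_bot']
      intro c hc
      have := hL i c
      rw [hc, Pi.single_zero] at this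
      funext k
      apply Subtype.ext
      refine h6 i (fun k => (c k : ℂ)) (fun k hk => ?_) this.symm k
      exact AmAux.mem_space.1 (c k).2 (by omega)
    · intro v
      obtain ⟨c, hc, hc'⟩ := h5 i (Pi.single i v) ((hW i _).2 ⟨v, rfl⟩)
      refine ⟨fun k => ⟨c k, AmAux.mem_space.2 fun h => hc k (by omega)⟩, ?_⟩
      have := congrFun hc' i
      simpa [L] using this.symm
  refine ⟨n, fun k => a k + 1, fun k => b k + 1, fun k => ⟨Nat.le_add_left 1 (a k),
    Nat.succ_le_succ (h1 k).1, (h1 k).2⟩, fun i => (LinearEquiv.ofBijective (L i) (hbij i)).symm, ?_⟩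
  intro i h v k
  obtain ⟨c, rfl⟩ := (hbij i).2 v
  have hc : (LinearEquiv.ofBijective (L i) (hbij i)).symm (L i c) = c :=
    (LinearEquiv.ofBijective (L i) (hbij i)).symm_apply_apply c
  rw [hc]
  suffices hs : f i h (L i c) = L ⟨(i : ℕ) + 1, h⟩
      (fun k => intervalMap (a k + 1) (b k + 1) ((i : ℕ) + 1) (c k)) by
    rw [hs]
    exact congrFun ((LinearEquiv.ofBijective (L ⟨(i : ℕ) + 1, h⟩) (hbij _)).symm_apply_apply _) k
  apply Pi.single_injective (M := V) (⟨(i : ℕ) + 1, h⟩ : Fin m)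
  rw [hL]
  have hTi := hT i (L i c)
  rw [dif_pos h] at hTi
  rw [← hTi, hL, map_sum]
  refine Finset.sum_congr rfl fun k _ => ?_
  rw [map_smul]
  by_cases hab : a k ≤ i ∧ (i : ℕ) ≤ b k
  · by_cases hb : (i : ℕ) < b k
    · rw [h3 k i hab.1 hb, AmAux.map_coe (by omega)]
    · have hib : (i : ℕ) = b k := by omega
      have hz : ((intervalMap (a k + 1) (b k + 1) ((i : ℕ) + 1) (c k) :
          intervalSpace (a k + 1) (b k + 1) ((i : ℕ) + 1 + 1)) : ℂ) = 0 :=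
        AmAux.mem_space.1 (Subtype.property _) (by omega)
      have hz' : T (e k i) = 0 := (congrArg (fun j => T (e k j)) hib).trans (h4 k)
      rw [hz, hz']; simp
  · have hz : c k = 0 := Subtype.ext (AmAux.mem_space.1 (c k).2 (by omega))
    rw [hz]; simp
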